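/- arXiv:quant-ph/0310133 — 7 statements merged into one kernel-verified Lean document; each statement's English description precedes it below -/
import Mathlib

section
/- Let N be an odd composite natural number and let m be the number of distinct prime factors of N. Let S be the set of units s ∈ (ℤ/Nℤ)ˣ such that either the multiplicative order ord(s) of s is odd, or s^(ord(s)/2) = −1 in (ℤ/Nℤ)ˣ. Then 2^(m−1)·|S| ≤ φ(N), i.e. |S| ≤ φ(N)/2^(m−1). -/
/-!
If `s` satisfies the order condition and `ord s` is even, then `s ^ (ord s / 2) = -1` stays
different from `1` modulo every prime divisor `p` of `N`. So reduction modulo `p` preserves the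
2-adic valuation of `ord s`, and this valuation decides whether an element of the cyclic group
`(ZMod p)ˣ` is a square. Fix one prime `q ∣ N`: for such `s`, the residue modulo `q` determines the
square class modulo each of the `m - 1` other primes, whereas by the Chinese remainder theorem these
`m - 1` classes are arbitrary on units with a given residue modulo `q`. This costs the factor
`2 ^ (m - 1)`.
-/

lemma dvd_div_iff_padicValNat_lt {p a n : ℕ} [Fact p.Prime] (hn : n ≠ 0) (hp : p ∣ n)
    (ha : a ∣ n) : a ∣ n / p ↔ padicValNat p a < padicValNat p n := by
  obtain ⟨k, rfl⟩ := ha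
  have ha₀ : a ≠ 0 := left_ne_zero_of_mul hn
  have hk₀ : k ≠ 0 := right_ne_zero_of_mul hn
  rw [Nat.dvd_div_iff_mul_dvd hp, mul_comm p, Nat.mul_dvd_mul_iff_left (Nat.pos_of_ne_zero ha₀),
    padicValNat.mul ha₀ hk₀, dvd_iff_padicValNat_ne_zero hk₀]
  lia

lemma padicValNat_orderOf_map {p : ℕ} [Fact p.Prime] {G H : Type*} [Monoid G] [Monoid H]
    (f : G →* H) {s : G} (hs : p ∣ orderOf s → f (s ^ (orderOf s / p)) ≠ 1) :
    padicValNat p (orderOf (f s)) = padicValNat p (orderOf s) := by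
  have hdvd : orderOf (f s) ∣ orderOf s := orderOf_map_dvd f s
  by_cases hp : p ∣ orderOf s
  · have hs₀ : orderOf s ≠ 0 := fun h ↦ hs hp (by simp [h])
    have hndvd : ¬ orderOf (f s) ∣ orderOf s / p := by
      rw [orderOf_dvd_iff_pow_eq_one, ← map_pow]
      exact hs hp
    rw [dvd_div_iff_padicValNat_lt hs₀ hp hdvd, not_lt] at hndvd
    exact (padicValNat_dvd_iff_le hs₀ |>.mp (pow_padicValNat_dvd.trans hdvd)).antisymm hndvd
  · rw [padicValNat.eq_zero_of_not_dvd hp,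
      padicValNat.eq_zero_of_not_dvd fun h ↦ hp (h.trans hdvd)]

lemma padicValNat_two_orderOf_map {G H : Type*} [Monoid G] [Monoid H] (f : G →* H) {s z : G}
    (hz : f z ≠ 1) (hs : Odd (orderOf s) ∨ s ^ (orderOf s / 2) = z) :
    padicValNat 2 (orderOf (f s)) = padicValNat 2 (orderOf s) := by
  refine padicValNat_orderOf_map f fun h ↦ ?_
  rwa [hs.resolve_left fun hodd ↦ hodd.not_two_dvd_nat h]

lemma square_eq_range_powMonoidHom (H : Type*) [CommGroup H] :
    Subgroup.square H = (powMonoidHom 2).range := by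
  ext x
  simp [isSquare_iff_exists_sq, eq_comm]

section Cyclic

variable {H : Type*} [CommGroup H] [IsCyclic H] [Finite H]

lemma range_powMonoidHom_eq_ker {d : ℕ} (hd : d ∣ Nat.card H) :
    (powMonoidHom d : H →* H).range = (powMonoidHom (Nat.card H / d)).ker := by
  refine Subgroup.eq_of_le_of_card_ge ?_ (le_of_eq ?_)
  · rintro _ ⟨x, rfl⟩
    simp [MonoidHom.mem_ker, ← pow_mul, Nat.mul_div_cancel' hd]
  · rw [IsCyclic.card_powMonoidHom_ker, IsCyclic.card_powMonoidHom_range,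
      Nat.gcd_eq_right hd, Nat.gcd_eq_right (Nat.div_dvd_of_dvd hd)]

lemma index_square_eq_two (hH : Even (Nat.card H)) : (Subgroup.square H).index = 2 := by
  rw [square_eq_range_powMonoidHom, IsCyclic.index_powMonoidHom_range,
    Nat.gcd_eq_right hH.two_dvd]

lemma isSquare_iff_padicValNat_orderOf_lt (hH : Even (Nat.card H)) (x : H) :
    IsSquare x ↔ padicValNat 2 (orderOf x) < padicValNat 2 (Nat.card H) := by
  rw [← Subgroup.mem_square, square_eq_range_powMonoidHom, range_powMonoidHom_eq_ker hH.two_dvd,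
    MonoidHom.mem_ker, powMonoidHom_apply, ← orderOf_dvd_iff_pow_eq_one,
    dvd_div_iff_padicValNat_lt Nat.card_pos.ne' hH.two_dvd (orderOf_dvd_natCard x)]

lemma mk_square_eq_of_padicValNat_orderOf_eq (hH : Even (Nat.card H)) {x y : H}
    (hxy : padicValNat 2 (orderOf x) = padicValNat 2 (orderOf y)) :
    (x : H ⧸ Subgroup.square H) = y := by
  rw [QuotientGroup.eq, Subgroup.mul_mem_iff_of_index_two (index_square_eq_two hH), inv_mem_iff,
    Subgroup.mem_square, Subgroup.mem_square, isSquare_iff_padicValNat_orderOf_lt hH,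
    isSquare_iff_padicValNat_orderOf_lt hH, hxy]

end Cyclic

lemma card_mul_ncard_le_card_of_map_eq_imp_map_eq {G A B : Type*} [Group G] [Finite G]
    [Group A] [Group B] (φ : G →* A) (ψ : G →* B) (hψ : ∀ b, ∃ u ∈ φ.ker, ψ u = b) {S : Set G}
    (hS : ∀ s ∈ S, ∀ t ∈ S, φ s = φ t → ψ s = ψ t) :
    Nat.card B * S.ncard ≤ Nat.card G := by
  choose u hφu hψu using hψ
  rw [← Nat.card_coe_set_eq, ← Nat.card_prod]
  refine Nat.card_le_card_of_injective (fun x : B × S ↦ u x.1 * x.2) ?_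
  rintro ⟨b, s, hs⟩ ⟨c, t, ht⟩ (hst : u b * s = u c * t)
  have hφ : φ s = φ t := by
    simpa [MonoidHom.mem_ker.mp (hφu _)] using congrArg φ hst
  have hbc : b = c := by
    simpa [hψu, hS s hs t ht hφ] using congrArg ψ hst
  subst hbc
  simpa using hst

lemma pi_unitsMap_surjective {ι : Type*} [Finite ι] {N : ℕ} [NeZero N] {a : ι → ℕ}
    (ha : Pairwise (Function.onFun Nat.Coprime a)) (hdvd : ∀ i, a i ∣ N) :
    Function.Surjective (MonoidHom.pi fun i ↦ ZMod.unitsMap (hdvd i)) := by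
  cases nonempty_fintype ι
  intro v
  have hprod : ∏ i, a i ∣ N :=
    Fintype.prod_dvd_of_isRelPrime (fun _ _ hij ↦ Nat.coprime_iff_isRelPrime.mp (ha hij)) hdvd
  let w : (ZMod (∏ i, a i))ˣ := Units.map (ZMod.prodEquivPi a ha).symm (MulEquiv.piUnits.symm v)
  have hw (i : ι) : ZMod.unitsMap (Finset.dvd_prod_of_mem a (Finset.mem_univ i)) w = v i :=
    Units.ext <| (ZMod.prodEquivPi_apply a ha w i).symm.trans
      (congrFun ((ZMod.prodEquivPi a ha).apply_symm_apply _) i)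
  obtain ⟨u, hu⟩ := ZMod.unitsMap_surjective hprod w
  refine ⟨u, funext fun i ↦ ?_⟩
  rw [MonoidHom.pi_apply, ← hw i, ← hu, ← MonoidHom.comp_apply, ZMod.unitsMap_comp]

lemma orderOf_unitsMap_neg_one {n m : ℕ} (h : n ∣ m) (hn : 2 < n) :
    orderOf (ZMod.unitsMap h (-1)) = 2 := by
  have : Fact (1 < n) := ⟨by lia⟩
  have : Fact (2 < n) := ⟨hn⟩
  rw [ZMod.unitsMap_def, Units.map_neg_one, ← orderOf_units, Units.val_neg, Units.val_one,
    orderOf_neg_one, ZMod.ringChar_zmod_n, if_neg hn.ne']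

theorem order_condition_card_le_totient_general {ι G : Type*} {H : ι → Type*} [Fintype ι]
    [Nonempty ι] [Group G] [Finite G] [∀ i, CommGroup (H i)] [∀ i, IsCyclic (H i)]
    (f : G →* ∀ i, H i) (hf : Function.Surjective f) {z : G} (hz : ∀ i, orderOf (f z i) = 2) :
    2 ^ (Fintype.card ι - 1) * {s : G | Odd (orderOf s) ∨ s ^ (orderOf s / 2) = z}.ncard
      ≤ Nat.card G := by
  classical
  obtain ⟨j⟩ := ‹Nonempty ι›
  have (i : ι) : Finite (H i) := .of_surjective _ ((Function.surjective_eval i).comp hf)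
  have heven (i : ι) : Even (Nat.card (H i)) :=
    even_iff_two_dvd.mpr (hz i ▸ orderOf_dvd_natCard (f z i))
  let φ (i : ι) : G →* H i := (Pi.evalMonoidHom H i).comp f
  let ψ : G →* ∀ i : {i // i ≠ j}, H i ⧸ Subgroup.square (H i) :=
    MonoidHom.pi fun i ↦ (QuotientGroup.mk' _).comp (φ i)
  have hψ (b) : ∃ u ∈ (φ j).ker, ψ u = b := by
    choose h hh using fun i ↦ QuotientGroup.mk_surjective (b i)
    obtain ⟨u, hu⟩ := hf fun i ↦ if hi : i = j then 1 else h ⟨i, hi⟩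
    have hφu (i : {i // i ≠ j}) : φ i u = h i := by simp [φ, hu, i.2]
    have hψu : ψ u = b := funext fun i ↦ (congrArg _ (hφu i)).trans (hh i)
    exact ⟨u, by simp [φ, MonoidHom.mem_ker, hu], hψu⟩
  have hcard : Nat.card (∀ i : {i // i ≠ j}, H i ⧸ Subgroup.square (H i)) =
      2 ^ (Fintype.card ι - 1) := by
    simp_rw [Nat.card_pi, ← Subgroup.index_eq_card, index_square_eq_two (heven _)]
    simp [Fintype.card_subtype_compl]
  have hval {s : G} (hs : Odd (orderOf s) ∨ s ^ (orderOf s / 2) = z) (i : ι) :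
      padicValNat 2 (orderOf (φ i s)) = padicValNat 2 (orderOf s) :=
    padicValNat_two_orderOf_map (φ i) (fun h ↦ by simpa [show f z i = 1 from h] using hz i) hs
  rw [← hcard]
  refine card_mul_ncard_le_card_of_map_eq_imp_map_eq (φ j) ψ hψ fun s hs t ht hst ↦ funext fun i ↦
    mk_square_eq_of_padicValNat_orderOf_eq (heven i) ?_
  rw [hval hs, hval ht, ← hval hs j, ← hval ht j, hst]

/-- Let `N` be an odd composite natural number with `m` distinct prime factors, and let
`S` be the set of units `s` of `ℤ/Nℤ` whose multiplicative order is odd or which satisfy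
`s ^ (ord s / 2) = -1`. Then `2^(m-1) * |S| ≤ φ(N)`. -/
theorem order_condition_card_le_totient (N : ℕ) (hNodd : Odd N) (hN : 1 < N)
    (hNnotprime : ¬ N.Prime) :
    2 ^ (N.primeFactors.card - 1) *
      {s : (ZMod N)ˣ | Odd (orderOf s) ∨ s ^ (orderOf s / 2) = -1}.ncard
      ≤ N.totient := by
  have : NeZero N := ⟨by lia⟩
  have : Nonempty N.primeFactors := (Nat.nonempty_primeFactors.mpr hN).to_subtype
  have hprime (p : N.primeFactors) : (p : ℕ).Prime := Nat.prime_of_mem_primeFactors p.2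
  have hdvd (p : N.primeFactors) : (p : ℕ) ∣ N := Nat.dvd_of_mem_primeFactors p.2
  have (p : N.primeFactors) : Fact (p : ℕ).Prime := ⟨hprime p⟩
  have hcoprime : Pairwise (Function.onFun Nat.Coprime ((↑) : N.primeFactors → ℕ)) :=
    fun p q hpq ↦ (Nat.coprime_primes (hprime p) (hprime q)).mpr (Subtype.coe_ne_coe.mpr hpq)
  have hneg (p : N.primeFactors) : orderOf (ZMod.unitsMap (hdvd p) (-1)) = 2 :=
    orderOf_unitsMap_neg_one (hdvd p) <|
      (hprime p).two_le.lt_of_ne' (hNodd.ne_two_of_dvd_nat (hdvd p))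
  simpa [ZMod.card_units_eq_totient] using
    order_condition_card_le_totient_general _ (pi_unitsMap_surjective hcoprime hdvd) hneg
end

section
/- Let n and r be positive integers with r dividing n, and let f : ℕ → ℂ satisfy f(x + r) = f(x) for all x ∈ ℕ. Define the quantum Fourier transform coefficients f̂(c) = (1/√n)·Σ_{k=0}^{n-1} f(k)·exp(−2πi·c·k/n) for integers c with 0 ≤ c < n. Then: if (n/r) divides c, f̂(c) = (√n/r)·Σ_{s=0}^{r-1} f(s)·exp(−2πi·c·s/n); and if (n/r) does not divide c, f̂(c) = 0. -/
/-!
Write `n = r * m`. Shifting `k` by the period `r` multiplies the summand `exp (-2πi c k / n) • f k`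
by the constant `w = exp (-2πi c / m)`, so cutting `{0, …, n - 1}` into `m` blocks of length `r`
factors the sum as `∑_{j < m} w ^ j` times the sum over the first block. Since `w` is the `-c`-th
power of a primitive `m`-th root of unity, the geometric sum is `m` if `m ∣ c` and `0` otherwise.
-/

open Finset

theorem sum_range_mul_of_add_eq_smul {R M : Type*} [Semiring R] [AddCommMonoid M] [Module R M]
    {g : ℕ → M} {r : ℕ} {w : R} (hg : ∀ k, g (k + r) = w • g k) (m : ℕ) :
    ∑ k ∈ range (r * m), g k = (∑ j ∈ range m, w ^ j) • ∑ s ∈ range r, g s := by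
  induction m with
  | zero => simp
  | succ m ih =>
    calc ∑ k ∈ range (r * (m + 1)), g k
        = ∑ s ∈ range r, g s + ∑ k ∈ range (r * m), g (k + r) := by
          simp only [Nat.mul_succ, add_comm _ r, sum_range_add]
      _ = ∑ s ∈ range r, g s + w • (∑ j ∈ range m, w ^ j) • ∑ s ∈ range r, g s := by
          simp only [hg, ← smul_sum, ih]
      _ = (∑ j ∈ range (m + 1), w ^ j) • ∑ s ∈ range r, g s := by
          rw [geom_sum_succ, add_smul, one_smul, mul_smul, add_comm]

theorem geom_sum_zpow_of_isPrimitiveRoot {K : Type*} [Field K] {ζ : K} {m : ℕ}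
    (hζ : IsPrimitiveRoot ζ m) (c : ℤ) :
    ∑ j ∈ range m, (ζ ^ c) ^ j = if (m : ℤ) ∣ c then (m : K) else 0 := by
  split_ifs with hmc
  · simp [(hζ.zpow_eq_one_iff_dvd c).2 hmc]
  · have hne : ζ ^ c ≠ 1 := mt (hζ.zpow_eq_one_iff_dvd c).1 hmc
    have hpow : (ζ ^ c) ^ m = 1 := by
      rw [← zpow_natCast, zpow_comm, zpow_natCast, hζ.pow_eq_one, one_zpow]
    rw [geom_sum_eq hne, hpow, sub_self, zero_div]

section QFT

variable {E : Type*} [AddCommMonoid E] [Module ℂ E] {n r : ℕ} {f : ℕ → E}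

/-- The coefficient `f̂(c)` of the quantum Fourier transform on `ℤ/nℤ`, for vector-valued `f` and
any integer frequency `c`; the scalars are complex, so the real factor `1 / √n` is cast. -/
noncomputable def qftCoeff (n : ℕ) (f : ℕ → E) (c : ℤ) : E :=
  ((1 / √n : ℝ) : ℂ) •
    ∑ k ∈ range n, Complex.exp (-(2 * Real.pi * Complex.I * c * k / n)) • f k

theorem sum_exp_smul_of_periodic (hn : 0 < n) (hdvd : r ∣ n) (hf : Function.Periodic f r) (c : ℤ) :
    ∑ k ∈ range n, Complex.exp (-(2 * Real.pi * Complex.I * c * k / n)) • f k =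
      (if ((n / r : ℕ) : ℤ) ∣ c then ((n / r : ℕ) : ℂ) else 0) •
        ∑ s ∈ range r, Complex.exp (-(2 * Real.pi * Complex.I * c * s / n)) • f s := by
  obtain ⟨m, rfl⟩ := hdvd
  obtain ⟨hr, hm⟩ : r ≠ 0 ∧ m ≠ 0 := mul_ne_zero_iff.1 hn.ne'
  rw [Nat.mul_div_cancel_left m (Nat.pos_of_ne_zero hr)]
  set ζ := Complex.exp (2 * Real.pi * Complex.I / m) with hζ_def
  have hζ : IsPrimitiveRoot ζ m := Complex.isPrimitiveRoot_exp m hm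
  have hshift (k : ℕ) :
      Complex.exp (-(2 * Real.pi * Complex.I * c * (k + r : ℕ) / (r * m : ℕ))) =
        ζ ^ (-c) * Complex.exp (-(2 * Real.pi * Complex.I * c * k / (r * m : ℕ))) := by
    rw [hζ_def, ← Complex.exp_int_mul, ← Complex.exp_add]
    congr 1
    push_cast
    field_simp
    ring
  rw [sum_range_mul_of_add_eq_smul (w := ζ ^ (-c)) fun k ↦ by rw [hshift, hf, mul_smul],
    geom_sum_zpow_of_isPrimitiveRoot hζ]
  simp only [dvd_neg]

theorem qftCoeff_of_dvd (hn : 0 < n) (hdvd : r ∣ n) (hf : Function.Periodic f r) {c : ℤ}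
    (hc : ((n / r : ℕ) : ℤ) ∣ c) :
    qftCoeff n f c = ((√n / r : ℝ) : ℂ) •
      ∑ s ∈ range r, Complex.exp (-(2 * Real.pi * Complex.I * c * s / n)) • f s := by
  have hr : (r : ℝ) ≠ 0 := Nat.cast_ne_zero.2 (Nat.pos_of_dvd_of_pos hdvd hn).ne'
  have hscale : 1 / √n * (n / r : ℕ) = √n / r := by
    rw [Nat.cast_div hdvd hr, one_div_mul_eq_div, div_right_comm, Real.div_sqrt]
  rw [qftCoeff, sum_exp_smul_of_periodic hn hdvd hf, if_pos hc, smul_smul, ← hscale,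
    Complex.ofReal_mul, Complex.ofReal_natCast]

theorem qftCoeff_eq_zero_of_not_dvd (hn : 0 < n) (hdvd : r ∣ n) (hf : Function.Periodic f r)
    {c : ℤ} (hc : ¬ ((n / r : ℕ) : ℤ) ∣ c) : qftCoeff n f c = 0 := by
  rw [qftCoeff, sum_exp_smul_of_periodic hn hdvd hf, if_neg hc, zero_smul, smul_zero]

theorem qft_periodic_general (hn : 0 < n) (hdvd : r ∣ n) (hf : Function.Periodic f r) (c : ℤ) :
    (((n / r : ℕ) : ℤ) ∣ c →
      qftCoeff n f c = ((√n / r : ℝ) : ℂ) •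
        ∑ s ∈ range r, Complex.exp (-(2 * Real.pi * Complex.I * c * s / n)) • f s) ∧
    (¬ ((n / r : ℕ) : ℤ) ∣ c → qftCoeff n f c = 0) :=
  ⟨qftCoeff_of_dvd hn hdvd hf, qftCoeff_eq_zero_of_not_dvd hn hdvd hf⟩

end QFT

/-- The quantum Fourier transform identifies periods: if `f : ℕ → ℂ` is periodic with
period `r` and `r ∣ n`, then the Fourier coefficient `f̂(c)` vanishes unless `(n/r) ∣ c`,
in which case `f̂(c) = (√n / r) · Σ_{s=0}^{r-1} f(s)·exp(−2πi·c·s/n)`. -/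
theorem qft_periodic (n r : ℕ) (hn : 0 < n) (hr : 0 < r) (hdvd : r ∣ n)
    (f : ℕ → ℂ) (hf : ∀ x : ℕ, f (x + r) = f x) (c : ℕ) (hc : c < n) :
    ((n / r ∣ c →
      ((1 / Real.sqrt n : ℝ) : ℂ) *
          ∑ k ∈ Finset.range n, f k * Complex.exp (-(2 * Real.pi * Complex.I * c * k / n)) =
        ((Real.sqrt n / r : ℝ) : ℂ) *
          ∑ s ∈ Finset.range r, f s * Complex.exp (-(2 * Real.pi * Complex.I * c * s / n)))) ∧
    (¬ (n / r ∣ c) →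
      ((1 / Real.sqrt n : ℝ) : ℂ) *
          ∑ k ∈ Finset.range n, f k * Complex.exp (-(2 * Real.pi * Complex.I * c * k / n)) = 0) := by
  simpa only [qftCoeff, smul_eq_mul, mul_comm (f _), Int.cast_natCast, Int.natCast_dvd_natCast]
    using qft_periodic_general hn hdvd hf c
end

section
/- Let x be a rational number, p an integer and r a positive natural number with gcd(p, r) = 1. If |p/r − x| < 1/(2r²), then p/r is a convergent of the continued fraction expansion of x; that is, there exists a natural number n such that the n-th convergent of the canonical continued fraction expansion of x equals p/r. -/
/-!
Over `ℝ` this is Legendre's theorem, `Real.exists_convs_eq_rat`. A linearly ordered field with a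
floor function is Archimedean, so it embeds into `ℝ`; the embedding commutes with floors,
fractional parts and inverses, hence with the formation of convergents, and Legendre's theorem
pulls back along it. Passing to lowest terms only weakens the bound on the error.
-/

section

variable {K : Type*} [Field K] [LinearOrder K] [IsStrictOrderedRing K] [FloorRing K]

theorem convs_of_map {L F : Type*} [Field L] [LinearOrder L] [IsStrictOrderedRing L] [FloorRing L]
    [FunLike F K L] [RingHomClass F K L] (f : F) (hf : StrictMono f) (x : K) (n : ℕ) :
    (GenContFract.of (f x)).convs n = f ((GenContFract.of x).convs n) := by
  induction n generalizing x with
  | zero => simp [Int.map_floor f hf]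
  | succ n ih =>
    have hfract : (Int.fract (f x))⁻¹ = f (Int.fract x)⁻¹ := by
      rw [Int.map_fract f hf, map_inv₀]
    rw [GenContFract.convs_succ, GenContFract.convs_succ, hfract, ih, Int.map_floor f hf,
      map_add, map_intCast, map_div₀, map_one]

theorem exists_convs_eq_ratCast {x : K} {q : ℚ} (h : |x - q| < 1 / (2 * (q.den : K) ^ 2)) :
    ∃ n, (GenContFract.of x).convs n = q := by
  obtain ⟨f⟩ : Nonempty (K →+*o ℝ) := inferInstance
  have hf : StrictMono f := f.monotone'.strictMono_of_injective (f : K →+* ℝ).injective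
  have hreal : |f x - q| < 1 / (2 * (q.den : ℝ) ^ 2) := by
    have hmap := hf h
    rwa [map_abs, map_sub, map_ratCast, map_div₀, map_one, map_mul, map_ofNat, map_pow,
      map_natCast] at hmap
  obtain ⟨n, hn⟩ := Real.exists_convs_eq_rat hreal
  exact ⟨n, hf.injective (by rw [← convs_of_map f hf, hn, map_ratCast])⟩

theorem den_intCast_div_natCast_dvd (p : ℤ) (r : ℕ) : ((p : ℚ) / r).den ∣ r := by
  rw [← Int.natCast_dvd_natCast, ← Int.cast_natCast (R := ℚ) r, ← Rat.divInt_eq_div]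
  exact Rat.den_dvd p r

theorem convergent_of_close_general (x : K) (p : ℤ) (r : ℕ) (hr : 0 < r)
    (h : |(p : K) / (r : K) - x| < 1 / (2 * (r : K) ^ 2)) :
    ∃ n : ℕ, (GenContFract.of x).convs n = (p : K) / (r : K) := by
  set q : ℚ := p / r
  have hcast : (p : K) / r = q := by simp [q]
  have hbound : 1 / (2 * (r : K) ^ 2) ≤ 1 / (2 * (q.den : K) ^ 2) := by
    have : 0 < q.den := q.den_pos
    gcongr
    exact Nat.le_of_dvd hr (den_intCast_div_natCast_dvd p r)
  rw [hcast, abs_sub_comm] at h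
  rw [hcast]
  exact exists_convs_eq_ratCast (h.trans_le hbound)

end

/-- If a rational `p/r` (in lowest terms) approximates `x` to within `1/(2r²)`, then
`p/r` is a convergent of the continued fraction expansion of `x`. -/
theorem convergent_of_close (x : ℚ) (p : ℤ) (r : ℕ) (hr : 0 < r)
    (hcop : Int.gcd p (r : ℤ) = 1)
    (h : |(p : ℚ) / (r : ℚ) - x| < 1 / (2 * (r : ℚ) ^ 2)) :
    ∃ n : ℕ, (GenContFract.of x).convs n = (p : ℚ) / (r : ℚ) :=
  convergent_of_close_general x p r hr h
end

section
/- Let r, q be integers with 0 < r ≤ q, and for each integer s let c_s denote the unique integer with −r/2 ≤ c_s·r − s·q < r/2. Then for every s with 0 ≤ s < r we have 0 ≤ c_s < q, and the map s ↦ c_s is injective on {0, 1, …, r−1}: if c_s = c_t with 0 ≤ s, t < r then s = t. -/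
/-!
The integer `c_s` is `s * q / r` rounded to a nearest integer. Raising `s` by one raises `s * q / r`
by `q / r ≥ 1`, and two numbers at distance at least one never round to the same integer, so `c` is
strictly increasing. The same spacing keeps `c_s` inside `[0, q)`: the quotient `s * q / r` is at
least `0`, and for `s ≤ r - 1` it is at most `q - q / r ≤ q - 1`.
-/

/-- `c` is the integer nearest to `a / r`, rounding down in case of a tie. The condition
`-1/2 ≤ c - a / r < 1/2` is cleared of denominators, so that `R` need not be a field. -/
def IsNearestQuotient {R : Type*} [Ring R] [LinearOrder R] (r a : R) (c : ℤ) : Prop :=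
  -r ≤ 2 * (c * r - a) ∧ 2 * (c * r - a) < r

section OrderedRing

variable {R : Type*} [CommRing R] [LinearOrder R] [IsStrictOrderedRing R]

namespace IsNearestQuotient

variable {r a b : R} {c d : ℤ}

theorem pos (h : IsNearestQuotient r a c) : 0 < r := by
  linarith [h.1, h.2]

theorem cast_lt (h : IsNearestQuotient r a c) {x : R} (hx : 2 * a + r ≤ 2 * (x * r)) :
    (c : R) < x :=
  lt_of_mul_lt_mul_right (by linarith [h.2] : (c : R) * r < x * r) h.pos.le

theorem nonneg (h : IsNearestQuotient r a c) (ha : 0 ≤ a) : 0 ≤ c := by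
  have hlower : (-1 : R) * r < c * r := by linarith [h.1, h.pos]
  have hcast : (-1 : R) < c := lt_of_mul_lt_mul_right hlower h.pos.le
  have hneg_one : -1 < c := by exact_mod_cast hcast
  lia

theorem lt_of_add_le (hc : IsNearestQuotient r a c) (hd : IsNearestQuotient r b d)
    (hab : a + r ≤ b) : c < d :=
  Int.cast_lt.mp (hc.cast_lt (by linarith [hd.1] : 2 * a + r ≤ 2 * ((d : R) * r)))

end IsNearestQuotient

variable {r q : R}

theorem strictMonoOn_of_isNearestQuotient (hrq : r ≤ q) {S : Set ℤ} {c : ℤ → ℤ}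
    (hc : ∀ s ∈ S, IsNearestQuotient r (s * q) (c s)) : StrictMonoOn c S := by
  intro s hs t ht hst
  have hq : 0 ≤ q := (hc s hs).pos.le.trans hrq
  have hstep : (s : R) + 1 ≤ t := by exact_mod_cast Int.add_one_le_of_lt hst
  refine (hc s hs).lt_of_add_le (hc t ht) ?_
  calc (s : R) * q + r ≤ s * q + q := by gcongr
    _ = (s + 1) * q := by ring
    _ ≤ t * q := by gcongr

theorem IsNearestQuotient.cast_lt_of_add_one_le {s c : ℤ} (h : IsNearestQuotient r (s * q) c)
    (hrq : r ≤ 2 * q) (hsr : (s : R) + 1 ≤ r) : (c : R) < q := by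
  have hq : 0 ≤ q := by linarith [h.pos]
  have hmul : ((s : R) + 1) * q ≤ r * q := by gcongr
  exact h.cast_lt (by linarith)

theorem good_c_injective_general (hrq : r ≤ q) {S : Set ℤ} {c : ℤ → ℤ}
    (hc : ∀ s ∈ S, IsNearestQuotient r (s * q) (c s)) :
    (∀ s ∈ S, 0 ≤ s → (s : R) + 1 ≤ r → 0 ≤ c s ∧ (c s : R) < q) ∧ StrictMonoOn c S := by
  refine ⟨fun s hs hs₀ hsr => ?_, strictMonoOn_of_isNearestQuotient hrq hc⟩
  have hr : 0 < r := (hc s hs).pos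
  have hs_cast : (0 : R) ≤ s := by exact_mod_cast hs₀
  exact ⟨(hc s hs).nonneg (mul_nonneg hs_cast (hr.le.trans hrq)),
    (hc s hs).cast_lt_of_add_one_le (by linarith) hsr⟩

end OrderedRing

/-- For `0 < r ≤ q` and `c_s` the unique integer with `−r/2 ≤ c_s·r − s·q < r/2`,
the integers `c_0, …, c_{r-1}` are distinct and lie in `[0, q)`. -/
theorem good_c_injective (r q : ℤ) (hr : 0 < r) (hrq : r ≤ q)
    (c : ℤ → ℤ)
    (hc : ∀ s : ℤ, 0 ≤ s → s < r →
      -r ≤ 2 * (c s * r - s * q) ∧ 2 * (c s * r - s * q) < r) :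
    (∀ s : ℤ, 0 ≤ s → s < r → 0 ≤ c s ∧ c s < q) ∧
    (∀ s t : ℤ, 0 ≤ s → s < r → 0 ≤ t → t < r → c s = c t → s = t) := by
  obtain ⟨hrange, hmono⟩ :=
    good_c_injective_general hrq (S := Set.Ico 0 r) fun s hs => hc s hs.1 hs.2
  exact ⟨fun s hs hsr => hrange s ⟨hs, hsr⟩ hs hsr,
    fun s t hs hsr ht htr hst => hmono.injOn ⟨hs, hsr⟩ ⟨ht, htr⟩ hst⟩
end

section
/- Let N, q, r, s, a, b, c be integers with 0 < r < N, 0 < b < N and N² ≤ q. If |s/r − c/q| ≤ 1/(2q) and |a/b − c/q| ≤ 1/(2q) (as real numbers), then s·b = a·r, i.e. s/r = a/b as rational numbers. -/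
section LinearOrderedField

variable {K : Type*} [Field K] [LinearOrder K] [IsStrictOrderedRing K]

lemma one_div_abs_mul_le_abs_intCast_div_sub_div {s r a b : ℤ} (hr : r ≠ 0) (hb : b ≠ 0)
    (hne : s * b ≠ a * r) : 1 / |(r : K) * b| ≤ |(s : K) / r - a / b| := by
  have hnum : 1 ≤ |(s : K) * b - r * a| := by
    exact_mod_cast Int.one_le_abs (sub_ne_zero.mpr (mul_comm a r ▸ hne))
  rw [div_sub_div _ _ (Int.cast_ne_zero.mpr hr) (Int.cast_ne_zero.mpr hb), abs_div]
  gcongr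

theorem convergent_unique_general {s r a b : ℤ} {x q : K} (hr : r ≠ 0) (hb : b ≠ 0)
    (hq : |(r : K) * b| < q) (h1 : |(s : K) / r - x| ≤ 1 / (2 * q))
    (h2 : |(a : K) / b - x| ≤ 1 / (2 * q)) : s * b = a * r := by
  by_contra hne
  have hrb : 0 < |(r : K) * b| :=
    abs_pos.mpr (mul_ne_zero (Int.cast_ne_zero.mpr hr) (Int.cast_ne_zero.mpr hb))
  have hclose : |(s : K) / r - a / b| < 1 / |(r : K) * b| :=
    calc |(s : K) / r - a / b|
      _ ≤ |(s : K) / r - x| + |(a : K) / b - x| := by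
        simpa only [abs_sub_comm x] using abs_sub_le ((s : K) / r) x (a / b)
      _ ≤ 1 / (2 * q) + 1 / (2 * q) := add_le_add h1 h2
      _ = 1 / q := by ring
      _ < 1 / |(r : K) * b| := one_div_lt_one_div_of_lt hrb hq
  exact hclose.not_ge (one_div_abs_mul_le_abs_intCast_div_sub_div hr hb hne)

end LinearOrderedField

/-- Uniqueness of the convergent: if `s/r` and `a/b` (with `0 < r < N`, `0 < b < N`,
`N² ≤ q`) both approximate `c/q` to within `1/(2q)`, then `s/r = a/b`. -/
theorem convergent_unique (N q r s a b c : ℤ)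
    (hr0 : 0 < r) (hrN : r < N) (hb0 : 0 < b) (hbN : b < N) (hq : N ^ 2 ≤ q)
    (h1 : |(s : ℝ) / (r : ℝ) - (c : ℝ) / (q : ℝ)| ≤ 1 / (2 * (q : ℝ)))
    (h2 : |(a : ℝ) / (b : ℝ) - (c : ℝ) / (q : ℝ)| ≤ 1 / (2 * (q : ℝ))) :
    s * b = a * r := by
  have hrb : |r * b| < q := by
    rw [abs_of_pos (mul_pos hr0 hb0)]
    exact (mul_lt_mul'' hrN hbN hr0.le hb0.le).trans_le (sq N ▸ hq)
  exact convergent_unique_general hr0.ne' hb0.ne' (by exact_mod_cast hrb) h1 h2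
end

section
/- For every natural number r ≥ 19, φ(r)/r > 1/(4·log(log r)), where φ is Euler's totient function and log is the natural logarithm; the inequality is between real numbers. -/
/-!
Let `L = log r`, so that `log (r / φ(r)) = ∑_{p ∣ r} -log (1 - 1/p)`. A prime `p > n` contributes
at most `log p / (n log (n + 1))` to this sum, a prime `p ≤ n` at least as much, and
`∑_{p ∣ r} log p ≤ L`; hence the sum is at most

  `∑_{p ≤ n} -log (1 - 1/p) + (L - θ(n)) / (n log (n + 1))`

for every `n`. When `log 19 ≤ L ≤ 40` take `n = 12`: the bound is affine in `L` and `log (4 log L)`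
is concave, so only the two endpoints have to be compared. When `40 ≤ L` take `n = ⌊L⌋`: the second
term is less than `log (4/3)`, and the first is at most `log (3 log n)`. The latter is Mertens'
third theorem with an explicit constant; it follows by partial summation, started at `n = 40`, from
the bound on `∑_{p ≤ n} log p / p` that comes from comparing `n!` with its prime factors.
-/

namespace TotientRatio

open Real Finset

/-- The logarithm of the Euler product `∏_{p ≤ n} (1 - 1/p)⁻¹` of Mertens' third theorem. -/
noncomputable def logEulerProduct (n : ℕ) : ℝ := ∑ p ∈ n.primesLE, -log (1 - (p : ℝ)⁻¹)

/-- The sum `∑_{p ≤ n} log p / p` of Mertens' first theorem. -/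
noncomputable def mertensSum (n : ℕ) : ℝ := ∑ p ∈ n.primesLE, log p / p

/-! ### Reduction to Euler products -/

lemma neg_log_one_sub_inv_le {x : ℝ} (hx : 1 < x) : -log (1 - x⁻¹) ≤ (x - 1)⁻¹ := by
  have hx₁ : 0 < x - 1 := sub_pos.2 hx
  have h := one_sub_inv_le_log_of_pos (sub_pos.2 (inv_lt_one_of_one_lt₀ hx))
  have hinv : 1 - (1 - x⁻¹)⁻¹ = -(x - 1)⁻¹ := by
    have hx₀ : x ≠ 0 := by linarith
    rw [show 1 - x⁻¹ = (x - 1) / x by field_simp]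
    field_simp
    ring
  linarith

lemma inv_le_neg_log_one_sub_inv {x : ℝ} (hx : 1 < x) : x⁻¹ ≤ -log (1 - x⁻¹) := by
  linarith [log_le_sub_one_of_pos (sub_pos.2 (inv_lt_one_of_one_lt₀ hx))]

lemma neg_log_one_sub_inv_le_of_lt {n p : ℕ} (hn : n ≠ 0) (hp : n < p) :
    -log (1 - (p : ℝ)⁻¹) ≤ log p / (n * log (n + 1)) := by
  have hn₁ : (1 : ℝ) ≤ n := by exact_mod_cast Nat.one_le_iff_ne_zero.2 hn
  have hnp : (n : ℝ) + 1 ≤ p := by exact_mod_cast hp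
  have hlog : 0 < log ((n : ℝ) + 1) := log_pos (by linarith)
  calc -log (1 - (p : ℝ)⁻¹) ≤ ((p : ℝ) - 1)⁻¹ := neg_log_one_sub_inv_le (by linarith)
    _ ≤ (n : ℝ)⁻¹ := inv_anti₀ (by linarith) (by linarith)
    _ = log (n + 1) / (n * log (n + 1)) := by field_simp
    _ ≤ log p / (n * log (n + 1)) := by gcongr

lemma le_neg_log_one_sub_inv_of_le {n p : ℕ} (hp : 2 ≤ p) (hpn : p ≤ n) :
    log p / (n * log (n + 1)) ≤ -log (1 - (p : ℝ)⁻¹) := by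
  have hp₂ : (2 : ℝ) ≤ p := by exact_mod_cast hp
  have hpn' : (p : ℝ) ≤ n := by exact_mod_cast hpn
  have hlog : 0 < log ((n : ℝ) + 1) := log_pos (by linarith)
  have hn : (0 : ℝ) < n := by linarith
  calc log p / (n * log (n + 1)) ≤ log (n + 1) / (n * log (n + 1)) := by gcongr; linarith
    _ = (n : ℝ)⁻¹ := by field_simp
    _ ≤ (p : ℝ)⁻¹ := inv_anti₀ (by linarith) hpn'
    _ ≤ -log (1 - (p : ℝ)⁻¹) := inv_le_neg_log_one_sub_inv (by linarith)

lemma sum_neg_log_one_sub_inv_le {n : ℕ} (hn : n ≠ 0) {s : Finset ℕ} (hs : ∀ p ∈ s, p.Prime) :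
    ∑ p ∈ s, -log (1 - (p : ℝ)⁻¹) ≤
      logEulerProduct n + (∑ p ∈ s, log p - Chebyshev.theta n) / (n * log (n + 1)) := by
  let excess (p : ℕ) : ℝ := -log (1 - (p : ℝ)⁻¹) - log p / (n * log (n + 1))
  have hlarge : ∀ p, n < p → excess p ≤ 0 := fun p hp ↦
    sub_nonpos.2 (neg_log_one_sub_inv_le_of_lt hn hp)
  have hsmall : ∀ p ∈ n.primesLE, 0 ≤ excess p := fun p hp ↦
    sub_nonneg.2 (le_neg_log_one_sub_inv_of_le (Nat.two_le_of_mem_primesLE hp)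
      (Nat.le_of_mem_primesLE hp))
  have hexcess : ∑ p ∈ s, excess p ≤ ∑ p ∈ n.primesLE, excess p :=
    calc ∑ p ∈ s, excess p
        = ∑ p ∈ s with p ≤ n, excess p + ∑ p ∈ s with ¬p ≤ n, excess p :=
          (sum_filter_add_sum_filter_not s (· ≤ n) excess).symm
      _ ≤ ∑ p ∈ s with p ≤ n, excess p := add_le_of_nonpos_right <|
          sum_nonpos fun p hp ↦ hlarge p (not_le.1 (mem_filter.1 hp).2)
      _ ≤ ∑ p ∈ n.primesLE, excess p := by
          refine sum_le_sum_of_subset_of_nonneg (fun p hp ↦ ?_) fun p hp _ ↦ hsmall p hp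
          have ⟨hps, hpn⟩ := mem_filter.1 hp
          exact Nat.mem_primesLE.2 ⟨hpn, hs p hps⟩
  simp only [excess, sum_sub_distrib, ← sum_div] at hexcess
  rw [logEulerProduct, Chebyshev.theta_eq_sum_primesLE_log, sub_div]
  linarith

lemma log_div_totient_eq_sum {r : ℕ} (hr : r ≠ 0) :
    log ((r : ℝ) / r.totient) = ∑ p ∈ r.primeFactors, -log (1 - (p : ℝ)⁻¹) := by
  have htotient : (r.totient : ℝ) = r * ∏ p ∈ r.primeFactors, (1 - (p : ℝ)⁻¹) := by
    have h := congrArg (Rat.cast : ℚ → ℝ) (Nat.totient_eq_mul_prod_factors r)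
    push_cast at h
    exact h
  have hfactor : ∀ p ∈ r.primeFactors, 1 - (p : ℝ)⁻¹ ≠ 0 := fun p hp ↦
    (sub_pos.2 (inv_lt_one_of_one_lt₀
      (by exact_mod_cast (Nat.prime_of_mem_primeFactors hp).one_lt))).ne'
  have hr' : (r : ℝ) ≠ 0 := Nat.cast_ne_zero.2 hr
  rw [htotient, div_mul_cancel_left₀ hr', log_inv, log_prod hfactor, sum_neg_distrib]

lemma sum_log_primeFactors_le {r : ℕ} (hr : r ≠ 0) :
    ∑ p ∈ r.primeFactors, log (p : ℝ) ≤ log r := by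
  have hpos : ∀ p ∈ r.primeFactors, (0 : ℝ) < p := fun p hp ↦
    Nat.cast_pos.2 (Nat.pos_of_mem_primeFactors hp)
  rw [← log_prod fun p hp ↦ (hpos p hp).ne']
  refine log_le_log (prod_pos hpos) ?_
  rw [← Nat.cast_prod]
  exact Nat.cast_le.2 (Nat.le_of_dvd (Nat.pos_of_ne_zero hr) (Nat.prod_primeFactors_dvd r))

theorem log_div_totient_le {r n : ℕ} (hr : r ≠ 0) (hn : n ≠ 0) :
    log ((r : ℝ) / r.totient) ≤
      logEulerProduct n + (log r - Chebyshev.theta n) / (n * log (n + 1)) := by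
  have hlog : 0 ≤ log ((n : ℝ) + 1) := log_nonneg (by simp)
  rw [log_div_totient_eq_sum hr]
  refine (sum_neg_log_one_sub_inv_le hn fun p ↦ Nat.prime_of_mem_primeFactors).trans ?_
  gcongr
  exact sum_log_primeFactors_le hr

/-! ### Explicit Mertens bounds -/

lemma log_factorial_le {n : ℕ} (hn : n ≠ 0) :
    log (n.factorial : ℝ) ≤ n * log n - n + log n / 2 + 1 := by
  have hn₀ : (n : ℝ) ≠ 0 := Nat.cast_ne_zero.2 hn
  have hanti : log (Stirling.stirlingSeq n) ≤ log (Stirling.stirlingSeq 1) := by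
    obtain ⟨m, rfl⟩ := Nat.exists_eq_succ_of_ne_zero hn
    exact log_le_log (Stirling.stirlingSeq'_pos m) (Stirling.stirlingSeq'_antitone m.zero_le)
  rw [Stirling.log_stirlingSeq_formula, Stirling.stirlingSeq_one,
    log_div (exp_ne_zero 1) (by positivity), log_sqrt (by norm_num), log_mul two_ne_zero hn₀,
    log_div hn₀ (exp_ne_zero 1), log_exp] at hanti
  linarith

lemma div_le_factorization_factorial {p : ℕ} (hp : p.Prime) (n : ℕ) :
    n / p ≤ n.factorial.factorization p := by
  rw [Nat.factorization_factorial hp (Nat.lt_add_of_pos_right (n := p.log n) two_pos)]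
  simpa using single_le_sum_of_canonicallyOrdered (f := fun i ↦ n / p ^ i)
    (show 1 ∈ Ico 1 (p.log n + 2) by simp)

lemma sum_div_mul_log_le_log_factorial (n : ℕ) :
    ∑ p ∈ n.primesLE, ((n / p : ℕ) : ℝ) * log p ≤ log (n.factorial : ℝ) := by
  rw [log_nat_eq_sum_factorization, Finsupp.sum]
  calc ∑ p ∈ n.primesLE, ((n / p : ℕ) : ℝ) * log p
      ≤ ∑ p ∈ n.primesLE, (n.factorial.factorization p : ℝ) * log p := by
        gcongr with p hp
        exact div_le_factorization_factorial (Nat.prime_of_mem_primesLE hp) n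
    _ ≤ ∑ p ∈ n.factorial.primeFactors, (n.factorial.factorization p : ℝ) * log p := by
        refine sum_le_sum_of_subset_of_nonneg (fun p hp ↦ ?_) fun p _ _ ↦ by positivity
        have hprime := Nat.prime_of_mem_primesLE hp
        exact hprime.mem_primeFactors (hprime.dvd_factorial.2 (Nat.le_of_mem_primesLE hp))
          n.factorial_ne_zero

lemma mul_mertensSum_le (n : ℕ) :
    n * mertensSum n ≤ log (n.factorial : ℝ) + Chebyshev.theta n := by
  refine le_trans ?_ (add_le_add_left (sum_div_mul_log_le_log_factorial n) _)
  rw [mertensSum, mul_sum, Chebyshev.theta_eq_sum_primesLE_log, ← sum_add_distrib]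
  refine sum_le_sum fun p _ ↦ ?_
  have hfloor : (n : ℝ) / p ≤ (n / p : ℕ) + 1 := by
    rw [← Nat.floor_div_eq_div (K := ℝ)]
    exact (Nat.lt_floor_add_one _).le
  calc (n : ℝ) * (log p / p) = n / p * log p := by ring
    _ ≤ ((n / p : ℕ) + 1) * log p := by gcongr
    _ = (n / p : ℕ) * log p + log p := by ring

theorem mertensSum_le {n : ℕ} (hn : n ≠ 0) :
    mertensSum n ≤ log n + (log 4 - 1 + log n / n / 2 + 1 / n) := by
  have hn₀ : (0 : ℝ) < n := Nat.cast_pos.2 (Nat.pos_of_ne_zero hn)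
  have htheta := Chebyshev.theta_le_log4_mul_x hn₀.le
  refine le_of_mul_le_mul_left ?_ hn₀
  calc n * mertensSum n ≤ log (n.factorial : ℝ) + Chebyshev.theta n := mul_mertensSum_le n
    _ ≤ (n * log n - n + log n / 2 + 1) + log 4 * n := add_le_add (log_factorial_le hn) htheta
    _ = n * (log n + (log 4 - 1 + log n / n / 2 + 1 / n)) := by field_simp; ring

/-- The quantity that partial summation shows to be nonincreasing as long as
`mertensSum n ≤ log n + c`. The summand `1 / n` absorbs the difference between `-log (1 - 1/p)`
and `1 / p`, which for `p = n + 1` is at most `1 / n - 1 / (n + 1)`. -/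
noncomputable def mertensPotential (c : ℝ) (n : ℕ) : ℝ :=
  logEulerProduct n - log (log n) + (c - mertensSum n) / log n + 1 / n

lemma sum_primesLE_succ (f : ℕ → ℝ) (n : ℕ) :
    ∑ p ∈ (n + 1).primesLE, f p =
      ∑ p ∈ n.primesLE, f p + if (n + 1).Prime then f (n + 1) else 0 := by
  simp only [Nat.primesLE_eq_filter_range, sum_filter, sum_range_succ _ (n + 1)]

lemma logEulerProduct_succ_sub_le {n : ℕ} (hn : n ≠ 0) :
    logEulerProduct (n + 1) - logEulerProduct n ≤
      (mertensSum (n + 1) - mertensSum n) / log (n + 1) + (1 / n - 1 / (n + 1)) := by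
  have hn₀ : (0 : ℝ) < n := Nat.cast_pos.2 (Nat.pos_of_ne_zero hn)
  simp only [logEulerProduct, mertensSum, sum_primesLE_succ _ n, add_sub_cancel_left]
  split_ifs
  · have hlog : log ((n : ℝ) + 1) ≠ 0 := (log_pos (by linarith)).ne'
    have hterm := neg_log_one_sub_inv_le (x := n + 1) (by linarith)
    rw [add_sub_cancel_right] at hterm
    push_cast
    rw [div_div_cancel_left' hlog]
    simpa only [one_div, add_sub_cancel] using hterm
  · rw [zero_div, zero_add, sub_nonneg]
    gcongr
    linarith

lemma mertensPotential_succ_le {c : ℝ} {n : ℕ} (hn : 2 ≤ n) (h : mertensSum n ≤ log n + c) :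
    mertensPotential c (n + 1) ≤ mertensPotential c n := by
  have hn₂ : (2 : ℝ) ≤ n := by exact_mod_cast hn
  have hlog : 0 < log (n : ℝ) := log_pos (by linarith)
  have hlog_le : log (n : ℝ) ≤ log (n + 1) := log_le_log (by linarith) (by linarith)
  have hlog_succ : 0 < log ((n : ℝ) + 1) := hlog.trans_le hlog_le
  have hloglog : 1 - log n / log (n + 1) ≤ log (log (n + 1)) - log (log n) := by
    rw [← log_div hlog_succ.ne' hlog.ne', ← inv_div]
    exact one_sub_inv_le_log_of_pos (by positivity)
  have hparts : (c - mertensSum n) / log (n + 1) - (c - mertensSum n) / log n ≤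
      1 - log n / log (n + 1) :=
    calc (c - mertensSum n) / log (n + 1) - (c - mertensSum n) / log n
        = (mertensSum n - c) * (1 / log n - 1 / log (n + 1)) := by ring
      _ ≤ log n * (1 / log n - 1 / log (n + 1)) := by
          gcongr
          · exact sub_nonneg.2 (by gcongr)
          · linarith
      _ = 1 - log n / log (n + 1) := by field_simp
  have hstep := logEulerProduct_succ_sub_le (n := n) (by omega)
  have hsplit : (c - mertensSum (n + 1)) / log (n + 1) =
      (c - mertensSum n) / log (n + 1) - (mertensSum (n + 1) - mertensSum n) / log (n + 1) := by
    ring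
  simp only [mertensPotential, Nat.cast_add_one]
  linarith

theorem logEulerProduct_le_of_mertensSum_le {c : ℝ} {m : ℕ} (hm : 2 ≤ m)
    (h : ∀ n ≥ m, mertensSum n ≤ log n + c) {n : ℕ} (hmn : m ≤ n) :
    logEulerProduct n ≤ log (log n) + 1 + mertensPotential c m := by
  have hpotential : mertensPotential c n ≤ mertensPotential c m := by
    induction n, hmn using Nat.le_induction with
    | base => rfl
    | succ k hk ih => exact (mertensPotential_succ_le (hm.trans hk) (h k hk)).trans ih
  have hlog : 0 < log (n : ℝ) := log_pos (by exact_mod_cast hm.trans hmn)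
  have hdefect : -1 ≤ (c - mertensSum n) / log n := by
    rw [le_div_iff₀ hlog]
    linarith [h n hmn]
  have hinv : (0 : ℝ) ≤ 1 / n := by positivity
  rw [mertensPotential] at hpotential
  linarith

/-! ### Numerical values -/

lemma le_log_of_pow_le {x y : ℝ} {a b : ℕ} (hb : 0 < b) (hy : y * b ≤ a)
    (h : 2.7182818286 ^ a ≤ x ^ b) : y ≤ log x := by
  have hexp : exp 1 ^ a ≤ x ^ b := (pow_le_pow_left₀ (exp_pos 1).le exp_one_lt_d9.le a).trans h
  have hlog := log_le_log (by positivity) hexp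
  rw [log_pow, log_pow, log_exp, mul_one] at hlog
  exact le_of_mul_le_mul_right (by linarith) (Nat.cast_pos.2 hb : (0 : ℝ) < b)

lemma log_le_of_le_pow {x y : ℝ} {a b : ℕ} (hx : 0 < x) (hb : 0 < b) (hy : a ≤ y * b)
    (h : x ^ b ≤ 2.7182818283 ^ a) : log x ≤ y := by
  have hexp : x ^ b ≤ exp 1 ^ a := h.trans (pow_le_pow_left₀ (by norm_num) exp_one_gt_d9.le a)
  have hlog := log_le_log (by positivity) hexp
  rw [log_pow, log_pow, log_exp, mul_one] at hlog
  exact le_of_mul_le_mul_right (by linarith) (Nat.cast_pos.2 hb : (0 : ℝ) < b)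

lemma log_forty_mem_Icc : log 40 ∈ Set.Icc 3.68 3.69 :=
  ⟨le_log_of_pow_le (a := 92) (b := 25) (by norm_num) (by norm_num) (by norm_num),
    log_le_of_le_pow (a := 107) (b := 29) (by norm_num) (by norm_num) (by norm_num) (by norm_num)⟩

lemma primesLE_twelve : Nat.primesLE 12 = {2, 3, 5, 7, 11} := by decide

lemma primesLE_forty : Nat.primesLE 40 = {2, 3, 5, 7, 11, 13, 17, 19, 23, 29, 31, 37} := by
  decide +kernel

lemma theta_twelve : Chebyshev.theta 12 = log 2310 := by
  have h := Chebyshev.theta_eq_log_primorial 12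
  rwa [Nat.floor_ofNat, primorial_eq_prod_primesLE, primesLE_twelve] at h

lemma logEulerProduct_eq_log_prod (n : ℕ) :
    logEulerProduct n = log (∏ p ∈ n.primesLE, (1 - (p : ℝ)⁻¹)⁻¹) := by
  rw [log_prod, logEulerProduct]
  · simp only [log_inv]
  · intro p hp
    exact inv_ne_zero (sub_pos.2 (inv_lt_one_of_one_lt₀
      (by exact_mod_cast Nat.one_lt_of_mem_primesLE hp))).ne'

lemma logEulerProduct_twelve : logEulerProduct 12 = log (77 / 16) := by
  rw [logEulerProduct_eq_log_prod, primesLE_twelve]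
  norm_num

lemma logEulerProduct_forty_le : logEulerProduct 40 ≤ log 6.73 := by
  rw [logEulerProduct_eq_log_prod, primesLE_forty]
  exact log_le_log (by norm_num) (by norm_num)

lemma natLog_pow_div_mul_log_le {b k : ℕ} (hb : 1 < b) (hk : k ≠ 0) (n : ℕ) :
    (Nat.log b (n ^ k) : ℝ) / k * log b ≤ log n := by
  have hlog : 0 < log (b : ℝ) := log_pos (by exact_mod_cast hb)
  have h := natLog_le_logb (n ^ k) b
  rw [Nat.cast_pow, logb_pow] at h
  rwa [← le_div_iff₀ hlog, log_div_log, div_le_iff₀' (Nat.cast_pos.2 (Nat.pos_of_ne_zero hk))]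

lemma mertensSum_forty_ge : 2.47 ≤ mertensSum 40 := by
  -- each `log p` is rounded down to a multiple of `(log 2) / 10`
  have h : ∑ p ∈ Nat.primesLE 40, (Nat.log 2 (p ^ 10) : ℝ) / 10 / p * log 2 ≤ mertensSum 40 := by
    refine sum_le_sum fun p _ ↦ ?_
    rw [div_mul_eq_mul_div]
    gcongr
    exact_mod_cast natLog_pow_div_mul_log_le (b := 2) (k := 10) (by norm_num) (by norm_num) p
  rw [← sum_mul, primesLE_forty] at h
  norm_num at h
  linarith [log_two_gt_d9]

lemma mertensSum_le_of_forty_le {n : ℕ} (hn : 40 ≤ n) : mertensSum n ≤ log n + 0.46 := by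
  have hn' : (40 : ℝ) ≤ n := by exact_mod_cast hn
  have hexp : exp 1 ≤ 40 := by linarith [exp_one_lt_d9]
  have hlog : log (n : ℝ) / n ≤ log 40 / 40 :=
    log_div_self_antitoneOn hexp (hexp.trans hn') hn'
  have hinv : 1 / (n : ℝ) ≤ 1 / 40 := by gcongr
  have hlog_four : log 4 ≤ 1.388 :=
    log_le_of_le_pow (a := 43) (b := 31) (by norm_num) (by norm_num) (by norm_num) (by norm_num)
  linarith [mertensSum_le (n := n) (by omega), log_forty_mem_Icc.2]

lemma mertensPotential_forty_le : mertensPotential 0.46 40 ≤ log 3 - 1 := by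
  obtain ⟨hlog_ge, hlog_le⟩ := log_forty_mem_Icc
  have heuler : logEulerProduct 40 - log (log 40) ≤ 0.61 := by
    calc logEulerProduct 40 - log (log 40) ≤ log 6.73 - log 3.68 :=
          sub_le_sub logEulerProduct_forty_le (log_le_log (by norm_num) hlog_ge)
      _ = log (6.73 / 3.68) := (log_div (by norm_num) (by norm_num)).symm
      _ ≤ 0.61 := log_le_of_le_pow (a := 61) (b := 100) (by norm_num) (by norm_num) (by norm_num)
          (by norm_num)
  have hmertens : (0.46 - mertensSum 40) / log 40 ≤ -0.54 := by
    rw [div_le_iff₀ (by linarith)]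
    linarith [mertensSum_forty_ge]
  rw [mertensPotential, Nat.cast_ofNat]
  linarith [log_three_gt_d9]

theorem logEulerProduct_le_log_three_mul_log {n : ℕ} (hn : 40 ≤ n) :
    logEulerProduct n ≤ log (3 * log n) := by
  have hlog : 0 < log (n : ℝ) := log_pos (by exact_mod_cast (by omega : 1 < n))
  rw [log_mul three_ne_zero hlog.ne']
  linarith [logEulerProduct_le_of_mertensSum_le (by norm_num)
    (fun _ ↦ mertensSum_le_of_forty_le) hn, mertensPotential_forty_le]

/-! ### The two ranges of `log r` -/

lemma concaveOn_log_log : ConcaveOn ℝ (Set.Ioi 1) fun x ↦ log (log x) := by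
  refine ⟨convex_Ioi 1, fun x hx y hy a b ha hb hab ↦ ?_⟩
  have hpos : Set.Ioi (1 : ℝ) ⊆ Set.Ioi 0 := Set.Ioi_subset_Ioi zero_le_one
  have hlog : ∀ z ∈ Set.Ioi (1 : ℝ), log z ∈ Set.Ioi 0 := fun z hz ↦ log_pos hz
  calc a • log (log x) + b • log (log y) ≤ log (a • log x + b • log y) :=
        strictConcaveOn_log_Ioi.concaveOn.2 (hlog x hx) (hlog y hy) ha hb hab
    _ ≤ log (log (a • x + b • y)) :=
        log_le_log (convex_Ioi 0 (hlog x hx) (hlog y hy) ha hb hab)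
          (strictConcaveOn_log_Ioi.concaveOn.2 (hpos hx) (hpos hy) ha hb hab)

lemma concaveOn_log_log_sub_div {a w : ℝ} (hw : 0 ≤ w) :
    ConcaveOn ℝ (Set.Ioi 1) fun x ↦ log (log x) - (x - a) / w := by
  have haffine : ConvexOn ℝ (Set.Ioi 1) fun x ↦ (x - a) / w := by
    simpa only [smul_eq_mul, inv_mul_eq_div, ← sub_eq_add_neg, id_eq, Pi.add_apply] using
      ((convexOn_id (convex_Ioi 1)).add_const (-a)).smul (inv_nonneg.2 hw)
  exact concaveOn_log_log.sub haffine

lemma log_thirteen_mem_Icc : log 13 ∈ Set.Icc 2.55 2.6 :=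
  ⟨le_log_of_pow_le (a := 51) (b := 20) (by norm_num) (by norm_num) (by norm_num),
    log_le_of_le_pow (a := 13) (b := 5) (by norm_num) (by norm_num) (by norm_num) (by norm_num)⟩

lemma log_nineteen_mem_Icc : log 19 ∈ Set.Icc 2.9 2.95 :=
  ⟨le_log_of_pow_le (a := 29) (b := 10) (by norm_num) (by norm_num) (by norm_num),
    log_le_of_le_pow (a := 59) (b := 20) (by norm_num) (by norm_num) (by norm_num) (by norm_num)⟩

lemma log_2310_ge : 7.7 ≤ log 2310 :=
  le_log_of_pow_le (a := 77) (b := 10) (by norm_num) (by norm_num) (by norm_num)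

lemma lt_log_log_log_nineteen_sub_div :
    0.19 < log (log (log 19)) - (log 19 - log 2310) / (12 * log 13) := by
  have hloglog : 1.06 ≤ log (log 19) :=
    (le_log_of_pow_le (a := 53) (b := 50) (by norm_num) (by norm_num) (by norm_num)).trans
      (log_le_log (by norm_num) log_nineteen_mem_Icc.1)
  have hlogloglog : 0.05 ≤ log (log (log 19)) :=
    (le_log_of_pow_le (a := 1) (b := 20) (by norm_num) (by norm_num) (by norm_num)).trans
      (log_le_log (by norm_num) hloglog)
  have hdiv : (log 19 - log 2310) / (12 * log 13) ≤ -0.15 := by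
    rw [div_le_iff₀ (by linarith [log_thirteen_mem_Icc.1])]
    linarith [log_thirteen_mem_Icc.2, log_nineteen_mem_Icc.2, log_2310_ge]
  linarith

lemma lt_log_log_forty_sub_div :
    0.19 < log (log 40) - (40 - log 2310) / (12 * log 13) := by
  have hloglog : 1.3 ≤ log (log 40) :=
    (le_log_of_pow_le (a := 13) (b := 10) (by norm_num) (by norm_num) (by norm_num)).trans
      (log_le_log (by norm_num) log_forty_mem_Icc.1)
  have hdiv : (40 - log 2310) / (12 * log 13) ≤ 1.06 := by
    rw [div_le_iff₀ (by linarith [log_thirteen_mem_Icc.1])]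
    linarith [log_thirteen_mem_Icc.1, log_2310_ge]
  linarith

lemma log_add_div_lt_log_four_mul_log {x : ℝ} (hx : x ∈ Set.Icc (log 19) 40) :
    log (77 / 16) + (x - log 2310) / (12 * log 13) < log (4 * log x) := by
  have hx_gt_one : 1 < x := by linarith [hx.1, log_nineteen_mem_Icc.1]
  have hconcave := concaveOn_log_log_sub_div (a := log 2310) (w := 12 * log 13)
    (by linarith [log_thirteen_mem_Icc.1])
  have hlt : 0.19 < log (log x) - (x - log 2310) / (12 * log 13) :=
    calc (0.19 : ℝ) < min (log (log (log 19)) - (log 19 - log 2310) / (12 * log 13))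
          (log (log 40) - (40 - log 2310) / (12 * log 13)) :=
        lt_min lt_log_log_log_nineteen_sub_div lt_log_log_forty_sub_div
      _ ≤ log (log x) - (x - log 2310) / (12 * log 13) :=
        hconcave.min_le_of_mem_Icc
          (Set.mem_Ioi.2 (by linarith [log_nineteen_mem_Icc.1])) (Set.mem_Ioi.2 (by norm_num)) hx
  have hratio : log (77 / 64) ≤ 0.19 :=
    log_le_of_le_pow (a := 19) (b := 100) (by norm_num) (by norm_num) (by norm_num) (by norm_num)
  rw [log_mul four_ne_zero (log_pos hx_gt_one).ne', show (77 / 16 : ℝ) = 4 * (77 / 64) by norm_num,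
    log_mul four_ne_zero (by norm_num)]
  linarith

lemma log_div_totient_lt_of_log_le {r : ℕ} (hr : 19 ≤ r) (hlog : log r ≤ 40) :
    log ((r : ℝ) / r.totient) < log (4 * log (log r)) := by
  have hle := log_div_totient_le (r := r) (n := 12) (by omega) (by norm_num)
  rw [logEulerProduct_twelve, Nat.cast_ofNat, theta_twelve,
    show (12 + 1 : ℝ) = 13 by norm_num] at hle
  have hlog_ge : log 19 ≤ log r := log_le_log (by norm_num) (by exact_mod_cast hr)
  exact hle.trans_lt (log_add_div_lt_log_four_mul_log ⟨hlog_ge, hlog⟩)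

lemma sub_theta_div_lt_log {x : ℝ} {n : ℕ} (hn : 40 ≤ n) (hxn : x < n + 1) :
    (x - Chebyshev.theta n) / (n * log (n + 1)) < log (4 / 3) := by
  have hn' : (40 : ℝ) ≤ n := by exact_mod_cast hn
  have hlog : 3.7 ≤ log ((n : ℝ) + 1) :=
    (le_log_of_pow_le (a := 37) (b := 10) (by norm_num) (by norm_num) (by norm_num)).trans
      (log_le_log (by norm_num : (0 : ℝ) < 41) (by linarith))
  calc (x - Chebyshev.theta n) / (n * log (n + 1))
      ≤ (n + 1) / (n * 3.7) := by
        gcongr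
        linarith [Chebyshev.theta_nonneg n]
    _ < 0.28 := by
        rw [div_lt_iff₀ (by positivity)]
        linarith
    _ ≤ log (4 / 3) :=
        le_log_of_pow_le (a := 7) (b := 25) (by norm_num) (by norm_num) (by norm_num)

lemma log_div_totient_lt_of_le_log {r : ℕ} (hr : r ≠ 0) (hlog : 40 ≤ log r) :
    log ((r : ℝ) / r.totient) < log (4 * log (log r)) := by
  obtain ⟨n, hn⟩ : ∃ n, n = ⌊log r⌋₊ := ⟨_, rfl⟩
  have hn₄₀ : 40 ≤ n := hn ▸ Nat.le_floor hlog
  have hnr : n ≤ log r := hn ▸ Nat.floor_le (by linarith)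
  have hloglog : 0 < log (n : ℝ) := log_pos (by exact_mod_cast (by omega : 1 < n))
  calc log ((r : ℝ) / r.totient)
      ≤ logEulerProduct n + (log r - Chebyshev.theta n) / (n * log (n + 1)) :=
        log_div_totient_le hr (by omega)
    _ < log (3 * log n) + log (4 / 3) :=
        add_lt_add_of_le_of_lt (logEulerProduct_le_log_three_mul_log hn₄₀)
          (sub_theta_div_lt_log hn₄₀ (hn ▸ Nat.lt_floor_add_one _))
    _ = log (4 * log n) := by
        rw [← log_mul (by positivity) (by norm_num)]
        ring_nf
    _ ≤ log (4 * log (log r)) := by gcongr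

end TotientRatio

/-- For `r ≥ 19`, `φ(r)/r > 1/(4·log log r)`. -/
theorem totient_ratio_lower_bound (r : ℕ) (hr : 19 ≤ r) :
    1 / (4 * Real.log (Real.log r)) < (r.totient : ℝ) / (r : ℝ) := by
  have hr₀ : (0 : ℝ) < r := Nat.cast_pos.2 (by omega)
  have hlog : Real.log (r / r.totient) < Real.log (4 * Real.log (Real.log r)) :=
    (le_total (Real.log r) 40).elim (TotientRatio.log_div_totient_lt_of_log_le hr)
      (TotientRatio.log_div_totient_lt_of_le_log (by omega))
  have hlog_gt_one : 1 < Real.log r := by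
    have hr₁₉ : (19 : ℝ) ≤ r := by exact_mod_cast hr
    rw [Real.lt_log_iff_exp_lt hr₀]
    linarith [Real.exp_one_lt_d9]
  have hloglog := Real.log_pos hlog_gt_one
  rw [← inv_div (r : ℝ), one_div]
  exact inv_strictAnti₀ (by positivity)
    ((Real.log_lt_log_iff (by positivity) (by positivity)).1 hlog)
end

section
/- Let N > 1 and y be natural numbers with gcd(y, N) = 1, and let r be the multiplicative order of y modulo N. If r is even, then gcd(N, y^(r/2) + 1) > 1; if in addition N does not divide y^(r/2) + 1, then gcd(N, y^(r/2) + 1) is a nontrivial factor of N, i.e. 1 < gcd(N, y^(r/2) + 1) < N. -/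
/-! Put `a = y ^ (r / 2)` in `ZMod N`. Then `a * a = 1` but `a ≠ 1`, by minimality of the order, so
`(a + 1) * (a - 1) = 0` with `a - 1 ≠ 0`. Hence `a + 1` is not a unit of `ZMod N`, which means that
`y ^ (r / 2) + 1` has a common factor with `N`. -/

theorem pow_half_orderOf_mul_self {M : Type*} [Monoid M] {x : M} (heven : Even (orderOf x)) :
    x ^ (orderOf x / 2) * x ^ (orderOf x / 2) = 1 := by
  rw [← pow_two, ← pow_mul, Nat.div_two_mul_two_of_even heven, pow_orderOf_eq_one]

theorem pow_half_orderOf_ne_one {M : Type*} [Monoid M] {x : M} (hx : 1 < orderOf x) :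
    x ^ (orderOf x / 2) ≠ 1 :=
  pow_ne_one_of_lt_orderOf (Nat.div_pos hx two_pos).ne'
    (Nat.div_lt_self (zero_lt_one.trans hx) one_lt_two)

theorem not_isUnit_add_one_of_mul_self_eq_one {R : Type*} [Ring R] {a : R} (hsq : a * a = 1)
    (hne : a ≠ 1) : ¬ IsUnit (a + 1) := by
  intro hunit
  have hprod : (a + 1) * (a - 1) = 0 := by rw [← mul_self_sub_one, hsq, sub_self]
  exact hne (sub_eq_zero.mp (hunit.mul_right_eq_zero.mp hprod))

theorem not_isUnit_pow_half_orderOf_add_one {R : Type*} [Ring R] {x : R} (hx : IsOfFinOrder x)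
    (heven : Even (orderOf x)) : ¬ IsUnit (x ^ (orderOf x / 2) + 1) := by
  have hlt : 1 < orderOf x := Nat.le_of_dvd hx.orderOf_pos heven.two_dvd
  exact not_isUnit_add_one_of_mul_self_eq_one (pow_half_orderOf_mul_self heven)
    (pow_half_orderOf_ne_one hlt)

theorem one_lt_gcd_iff_not_isUnit_natCast {N : ℕ} (hN : 0 < N) (m : ℕ) :
    1 < Nat.gcd N m ↔ ¬ IsUnit (m : ZMod N) := by
  have hpos : 0 < Nat.gcd N m := Nat.gcd_pos_of_pos_left m hN
  rw [ZMod.isUnit_iff_coprime, Nat.coprime_comm, Nat.coprime_iff_gcd_eq_one]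
  lia

theorem gcd_lt_left_iff_not_dvd {N : ℕ} (hN : 0 < N) (m : ℕ) : Nat.gcd N m < N ↔ ¬ N ∣ m :=
  (Nat.gcd_le_left m hN).lt_iff_ne.trans Nat.gcd_eq_left_iff_dvd.not

/-- Reduction of factoring to order finding: if `gcd(y,N) = 1` and the multiplicative
order `r` of `y` mod `N` is even, then `gcd(N, y^(r/2) + 1) > 1`; if moreover
`N ∤ y^(r/2) + 1`, then `gcd(N, y^(r/2) + 1)` is a nontrivial factor of `N`. -/
theorem factor_from_order (N y : ℕ) (hN : 1 < N) (hgcd : Nat.gcd y N = 1)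
    (r : ℕ) (hr : r = orderOf (y : ZMod N)) (hreven : Even r) :
    1 < Nat.gcd N (y ^ (r / 2) + 1) ∧
      (¬ N ∣ y ^ (r / 2) + 1 → Nat.gcd N (y ^ (r / 2) + 1) < N) := by
  have hpos : 0 < N := zero_lt_one.trans hN
  have : NeZero N := ⟨hpos.ne'⟩
  subst hr
  refine ⟨?_, (gcd_lt_left_iff_not_dvd hpos _).mpr⟩
  have hfin : IsOfFinOrder (y : ZMod N) :=
    isOfFinOrder_iff_isUnit.mpr ((ZMod.isUnit_iff_coprime y N).mpr hgcd)
  rw [one_lt_gcd_iff_not_isUnit_natCast hpos]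
  push_cast
  exact not_isUnit_pow_half_orderOf_add_one hfin hreven
end
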